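/- arXiv:2503.16786 — 2 statements merged into one kernel-verified Lean document; each statement's English description precedes it below -/
import Mathlib

section
/- Let X₁, …, X_N be i.i.d. standard Gaussian random variables and let r > 0. Then for N > max{e⁴, r+1}, E[1 / (max_{1≤k≤N} |X_k|)^r] ≤ C_r (log N)^{-r/2} for a constant C_r depending only on r. -/
open MeasureTheory ProbabilityTheory Real

/-- The correction function near zero. -/
noncomputable def auxH (s : ℝ) (y : ℝ) : ℝ := (Set.Iic (1:ℝ)).indicator (fun y => y ^ (-s) - 1) y

lemma auxH_integral (s : ℝ) (hs : 0 < s) (hs1 : s < 1) :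
    ∫ x : ℝ, auxH s |x| = 2 * (s / (1 - s)) := by
  rw [integral_comp_abs (f := auxH s)]
  congr 1
  unfold auxH
  rw [setIntegral_indicator measurableSet_Iic]
  have : Set.Ioi (0:ℝ) ∩ Set.Iic 1 = Set.Ioc 0 1 := rfl
  rw [this, ← intervalIntegral.integral_of_le zero_le_one, intervalIntegral.integral_sub
    (intervalIntegral.intervalIntegrable_rpow' (by linarith)) (by simp),
    integral_rpow (Or.inl (by linarith))]
  have h1 : -s + 1 ≠ 0 := by linarith
  have h2 : 1 - s ≠ 0 := by linarith
  rw [Real.zero_rpow h1]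
  simp
  field_simp
  ring

lemma auxH_integrable (s : ℝ) (hs : 0 < s) (hs1 : s < 1) :
    Integrable (fun x : ℝ => auxH s |x|) := by
  apply Integrable.of_integral_ne_zero
  rw [auxH_integral s hs hs1]
  have : 0 < s / (1 - s) := div_pos hs (by linarith)
  positivity

lemma pdf_eq (x : ℝ) : gaussianPDFReal 0 1 x = (√(2 * π))⁻¹ * exp (- x ^ 2 / 2) := by
  simp [gaussianPDFReal]

lemma gauss_le_volume : gaussianReal 0 1 ≤ (volume : Measure ℝ) := by
  rw [gaussianReal_of_var_ne_zero _ one_ne_zero]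
  conv_rhs => rw [← withDensity_one (μ := (volume : Measure ℝ))]
  apply withDensity_mono
  refine ae_of_all _ fun x => ?_
  simp only [gaussianPDF, Pi.one_apply]
  rw [ENNReal.ofReal_le_one, pdf_eq]
  have h1 : 1 ≤ √(2 * π) := by
    rw [Real.one_le_sqrt]; linarith [Real.pi_gt_three]
  have h2 : exp (- x ^ 2 / 2) ≤ 1 := by
    rw [Real.exp_le_one_iff]; nlinarith [sq_nonneg x]
  calc _ ≤ (1:ℝ) * 1 := mul_le_mul (inv_le_one_of_one_le₀ h1) h2 (exp_pos _).le zero_le_one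
    _ = 1 := one_mul 1

lemma auxH_gauss (s : ℝ) (hs : 0 < s) (hs1 : s < 1) :
    ∫ x : ℝ, auxH s |x| ∂(gaussianReal 0 1) ≤ 2 * (s / (1 - s)) := by
  rw [← auxH_integral s hs hs1]
  refine integral_mono_measure gauss_le_volume ?_ (auxH_integrable s hs hs1)
  have h0 : ∀ᵐ x : ℝ, x ≠ 0 := by simp [ae_iff]
  filter_upwards [h0] with x hx
  unfold auxH
  refine Set.indicator_apply_nonneg ?_ 
  intro h
  have : 1 ≤ |x| ^ (-s) := Real.one_le_rpow_of_pos_of_le_one_of_nonpos (abs_pos.2 hx) h (by linarith)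
  linarith

lemma gauss_tail (t : ℝ) (ht : 0 ≤ t) :
    exp (-(t + 1) ^ 2 / 2) / 3 ≤ (gaussianReal 0 1).real {x | t ≤ |x|} := by
  have h1 : (gaussianReal 0 1).real (Set.Icc t (t+1)) ≤ (gaussianReal 0 1).real {x | t ≤ |x|} :=
    measureReal_mono (fun x hx => hx.1.trans (le_abs_self x))
  refine le_trans ?_ h1
  rw [measureReal_def, gaussianReal_apply_eq_integral _ one_ne_zero, ENNReal.toReal_ofReal
    (integral_nonneg fun x => gaussianPDFReal_nonneg _ _ _)]
  have h2 : ∫ x in Set.Icc t (t+1), exp (-(t + 1) ^ 2 / 2) / 3 = exp (-(t + 1) ^ 2 / 2) / 3 := by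
    simp
  rw [← h2]
  refine setIntegral_mono_on (by simp) (integrable_gaussianPDFReal _ _).integrableOn
    measurableSet_Icc ?_
  intro x hx
  rw [pdf_eq, div_eq_inv_mul]
  have h3 : √(2 * π) ≤ 3 := by
    rw [Real.sqrt_le_left (by norm_num)]; linarith [Real.pi_lt_d2]
  have h4 : 0 < √(2 * π) := Real.sqrt_pos.2 (by positivity)
  have h5 : x ^ 2 ≤ (t + 1) ^ 2 := by
    have := hx.1; have := hx.2
    nlinarith
  gcongr

/-- The single-coordinate majorant. -/
noncomputable def auxF (t s x : ℝ) : ℝ := {x : ℝ | |x| < t}.indicator (fun _ => (1:ℝ)) x + auxH s |x|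

lemma meas_lt (t : ℝ) : MeasurableSet {x : ℝ | |x| < t} :=
  measurableSet_lt (by fun_prop) (by fun_prop)

lemma auxF_integrable (t s : ℝ) (hs : 0 < s) (hs1 : s < 1) :
    Integrable (auxF t s) (gaussianReal 0 1) := by
  unfold auxF
  exact ((integrable_const _).indicator (meas_lt t)).add
    ((auxH_integrable s hs hs1).mono_measure gauss_le_volume)

lemma auxF_integral (t s : ℝ) (ht : 0 ≤ t) (hs : 0 < s) (hs1 : s < 1) :
    ∫ x, auxF t s x ∂(gaussianReal 0 1) ≤
      1 - exp (-(t + 1) ^ 2 / 2) / 3 + 2 * (s / (1 - s)) := by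
  unfold auxF
  rw [integral_add ((integrable_const _).indicator (meas_lt t))
    ((auxH_integrable s hs hs1).mono_measure gauss_le_volume)]
  refine add_le_add ?_ (auxH_gauss s hs hs1)
  rw [integral_indicator_const _ (meas_lt t)]
  have h1 := gauss_tail t ht
  have h2 : {x : ℝ | t ≤ |x|} = {x : ℝ | |x| < t}ᶜ := by
    ext x; simp
  rw [h2, probReal_compl_eq_one_sub (meas_lt t)] at h1
  simp only [smul_eq_mul, mul_one]
  linarith

lemma auxF_nonneg (t s x : ℝ) (hs : 0 < s) (hx : x ≠ 0) : 0 ≤ auxF t s x := by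
  unfold auxF auxH
  refine add_nonneg (Set.indicator_nonneg (fun _ _ => zero_le_one) _) (Set.indicator_apply_nonneg ?_)
  intro h
  have : 1 ≤ |x| ^ (-s) := Real.one_le_rpow_of_pos_of_le_one_of_nonpos (abs_pos.2 hx) h (by linarith)
  linarith

lemma auxF_ge (t s x : ℝ) (hs : 0 < s) (hx : |x| < t) : |x| ^ (-s) ≤ auxF t s x := by
  unfold auxF auxH
  rw [Set.indicator_of_mem (show x ∈ {x : ℝ | |x| < t} from hx)]
  by_cases h : |x| ≤ 1
  · rw [Set.indicator_of_mem (show |x| ∈ Set.Iic (1:ℝ) from h)]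
    linarith
  · rw [Set.indicator_of_notMem (show |x| ∉ Set.Iic (1:ℝ) from h)]
    rw [add_zero]
    exact Real.rpow_le_one_of_one_le_of_nonpos (by linarith) (by linarith)

lemma pointwise (N : ℕ) (hN : 0 < N) (r t : ℝ) (hr : 0 < r) (ht : 0 < t) (a : Fin N → ℝ)
    (ha : ∀ k, a k ≠ 0) :
    (⨆ k, |a k|) ^ (-r) ≤ t ^ (-r) + ∏ k, auxF t (r / N) (a k) := by
  have hN' : (0:ℝ) < N := by exact_mod_cast hN
  have hs : 0 < r / N := div_pos hr hN'
  have hbdd : BddAbove (Set.range fun k => |a k|) := (Set.finite_range _).bddAbove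
  have hle : ∀ k, |a k| ≤ ⨆ k, |a k| := fun k => le_ciSup hbdd k
  have hprod : 0 ≤ ∏ k, auxF t (r / N) (a k) :=
    Finset.prod_nonneg fun k _ => auxF_nonneg _ _ _ hs (ha k)
  have hM : 0 < ⨆ k, |a k| := (abs_pos.2 (ha ⟨0, hN⟩)).trans_le (hle _)
  by_cases h : t ≤ ⨆ k, |a k|
  · have := Real.rpow_le_rpow_of_nonpos ht h (by linarith : -r ≤ 0)
    linarith
  · push Not at h
    have h1 : (⨆ k, |a k|) ^ (-r) = ∏ k : Fin N, (⨆ k, |a k|) ^ (-(r / N)) := by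
      rw [Finset.prod_const, Finset.card_univ, Fintype.card_fin, ← Real.rpow_natCast,
        ← Real.rpow_mul hM.le]
      congr 1
      field_simp
    have h2 : ∏ k : Fin N, (⨆ k, |a k|) ^ (-(r / N)) ≤ ∏ k, auxF t (r / N) (a k) := by
      refine Finset.prod_le_prod (fun k _ => (Real.rpow_pos_of_pos hM _).le) fun k _ => ?_
      refine le_trans ?_ (auxF_ge t _ _ hs ((hle k).trans_lt h))
      exact Real.rpow_le_rpow_of_nonpos (abs_pos.2 (ha k)) (hle k) (by linarith)
    have := Real.rpow_pos_of_pos ht (-r)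
    linarith

lemma final_bound (r y L : ℝ) (hr : 0 < r) (hL : 0 < L) (hLy : L ≤ 2 * y) :
    exp (-(y / 3)) ≤ (3 * r) ^ (r / 2) * L ^ (-r / 2) := by
  have h1 : L ≤ 3 * r * exp (2 * y / (3 * r)) := by
    have := Real.add_one_le_exp (2 * y / (3 * r))
    have h2 : 3 * r * (2 * y / (3 * r)) = 2 * y := by field_simp
    nlinarith
  have h2 : L ^ (r / 2) ≤ (3 * r) ^ (r / 2) * exp (y / 3) := by
    calc L ^ (r / 2) ≤ (3 * r * exp (2 * y / (3 * r))) ^ (r / 2) :=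
          Real.rpow_le_rpow hL.le h1 (by positivity)
      _ = _ := by
          rw [Real.mul_rpow (by positivity) (exp_pos _).le, ← Real.exp_mul]
          congr 2
          field_simp
  rw [neg_div, Real.rpow_neg hL.le, Real.exp_neg]
  have h3 := Real.rpow_pos_of_pos hL (r / 2)
  have h4 := exp_pos (y / 3)
  rw [← div_eq_mul_inv, le_div_iff₀ h3, inv_mul_le_iff₀ h4]
  linarith

/-- Negative moments of the maximum of `N` i.i.d. standard Gaussians:
`E[(max_k |X_k|)^{-r}] ≤ C_r (log N)^{-r/2}` for `N > max{e⁴, r+1}`. -/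
theorem expected_inv_max_gaussian (r : ℝ) (hr : 0 < r) :
    ∃ C : ℝ, 0 < C ∧ ∀ N : ℕ, Real.exp 4 < N → r + 1 < N →
      (∫ a : Fin N → ℝ, (⨆ k, |a k|) ^ (-r) ∂(Measure.pi fun _ => gaussianReal 0 1)) ≤
        C * Real.log N ^ (-r / 2) := by
  refine ⟨2 ^ r + exp (2 * r * (1 + r)) * (3 * r) ^ (r / 2), by positivity, ?_⟩
  intro N hN4 hNr
  have hNpos : (0:ℝ) < N := by linarith
  have hNn : 0 < N := by exact_mod_cast hNpos
  set L := Real.log N with hLdef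
  have hL4 : 4 < L := by
    rw [hLdef, Real.lt_log_iff_exp_lt hNpos]; exact hN4
  have hL : 0 < L := by linarith
  have hsq : 2 ≤ √L := Real.le_sqrt_of_sq_le (by linarith)
  set t := √L / 2 with htdef
  have ht : 0 < t := by linarith
  have hs : 0 < r / N := div_pos hr hNpos
  have hs1 : r / N < 1 := by rw [div_lt_one hNpos]; linarith
  have hint : Integrable (fun a : Fin N → ℝ => ∏ k, auxF t (r / N) (a k))
      (Measure.pi fun _ => gaussianReal 0 1) :=
    Integrable.fintype_prod (f := fun _ => auxF t (r / N)) fun _ => auxF_integrable t _ hs hs1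
  have h0 : ∀ᵐ x ∂(gaussianReal 0 1), x ≠ 0 := by
    have h0 : ∀ᵐ x : ℝ, x ≠ 0 := by simp [ae_iff]
    exact ae_mono gauss_le_volume h0
  have h0' : ∀ᵐ a ∂(Measure.pi fun _ : Fin N => gaussianReal 0 1), ∀ k, a k ≠ 0 :=
    Filter.eventually_all.2 fun i =>
      (Measure.tendsto_eval_ae_ae (μ := fun _ : Fin N => gaussianReal 0 1) (i := i)).eventually h0
  have key : (∫ a : Fin N → ℝ, (⨆ k, |a k|) ^ (-r) ∂(Measure.pi fun _ => gaussianReal 0 1)) ≤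
      ∫ a : Fin N → ℝ, (t ^ (-r) + ∏ k, auxF t (r / N) (a k))
        ∂(Measure.pi fun _ => gaussianReal 0 1) := by
    refine integral_mono_of_nonneg ?_ ((integrable_const _).add hint) ?_
    · exact ae_of_all _ fun a => Real.rpow_nonneg (Real.iSup_nonneg fun k => abs_nonneg _) _
    · filter_upwards [h0'] with a ha
      exact pointwise N hNn r t hr ht a ha
  refine key.trans ?_
  rw [integral_add (integrable_const _) hint, integral_fintype_prod_eq_pow, Fintype.card_fin]
  simp only [integral_const, probReal_univ, one_smul]
  have e1 : t ^ (-r) = 2 ^ r * L ^ (-r / 2) := by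
    rw [htdef, Real.div_rpow (by positivity) (by norm_num), Real.rpow_div_two_eq_sqrt _ hL.le,
      Real.rpow_neg (by norm_num : (0:ℝ) ≤ 2)]
    field_simp
  have hEnn : 0 ≤ ∫ x, auxF t (r / N) x ∂(gaussianReal 0 1) := by
    refine integral_nonneg_of_ae ?_
    filter_upwards [h0] with x hx
    exact auxF_nonneg _ _ _ hs hx
  have hE := auxF_integral t (r / N) ht.le hs hs1
  have hy : 0 < √(N:ℝ) := Real.sqrt_pos.2 hNpos
  have hyy : √(N:ℝ) * √(N:ℝ) = N := Real.mul_self_sqrt hNpos.le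
  have hyexp : (√(N:ℝ))⁻¹ ≤ exp (-(t + 1) ^ 2 / 2) := by
    have : √(N:ℝ) = exp (L / 2) := by
      rw [Real.exp_half, hLdef, Real.exp_log hNpos]
    rw [this, ← Real.exp_neg, Real.exp_le_exp]
    have h1 : √L * √L = L := Real.mul_self_sqrt hL.le
    have h2 : t + 1 ≤ √L := by linarith
    nlinarith
  have hfrac : N * (2 * (r / N / (1 - r / N))) ≤ 2 * r * (1 + r) := by
    have hd : 0 < N - r := by linarith
    have : (N:ℝ) * (2 * (r / N / (1 - r / N))) = 2 * r * (N / (N - r)) := by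
      have : (1:ℝ) - r / N = (N - r) / N := by field_simp
      rw [this]; field_simp
    rw [this]
    refine mul_le_mul_of_nonneg_left ?_ (by positivity)
    rw [div_le_iff₀ hd]
    nlinarith
  have hpow : (∫ x, auxF t (r / N) x ∂(gaussianReal 0 1)) ^ N ≤
      exp (2 * r * (1 + r)) * exp (-(√(N:ℝ) / 3)) := by
    set q := -(√(N:ℝ))⁻¹ / 3 + 2 * (r / N / (1 - r / N)) with hq
    have h1 : ∫ x, auxF t (r / N) x ∂(gaussianReal 0 1) ≤ exp q := by
      have := Real.add_one_le_exp q
      linarith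
    refine (pow_le_pow_left₀ hEnn h1 N).trans ?_
    rw [← Real.exp_nat_mul, ← Real.exp_add, Real.exp_le_exp, hq, mul_add]
    have : (N:ℝ) * (-(√(N:ℝ))⁻¹ / 3) = -(√(N:ℝ) / 3) := by
      nth_rewrite 1 [← hyy]; field_simp
    linarith
  have hLy : L ≤ 2 * √(N:ℝ) := by
    have := Real.log_le_sub_one_of_pos hy
    rw [Real.log_sqrt hNpos.le] at this
    linarith
  have hfin := final_bound r _ L hr hL hLy
  rw [e1, add_mul, mul_assoc (exp _)]
  refine add_le_add le_rfl (hpow.trans ?_)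
  exact mul_le_mul_of_nonneg_left hfin (exp_pos _).le
end

section
/- Let T_a(x) = a₁ + Σ_{k=1}^n (a_{2k}√2 cos kx + a_{2k+1}√2 sin kx), a ~ N(0, I_N), N = 2n+1. Then for any r > 0 and N > max{e⁴, r+1}, E[‖T_a‖_∞^{-r}] ≤ C_r N^{-r/2} (log N)^{-r/2} for a constant C_r depending only on r. -/
open MeasureTheory ProbabilityTheory Real

/-- The random trigonometric polynomial
`T_a(x) = a₁ + ∑_{k=1}^n (a_{2k} √2 cos kx + a_{2k+1} √2 sin kx)`. -/
noncomputable def trigPoly (n : ℕ) (a : Fin (2 * n + 1) → ℝ) (x : ℝ) : ℝ :=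
  a ⟨0, by omega⟩ + ∑ k : Fin n,
    (a ⟨2 * k.1 + 1, by have := k.2; omega⟩ * Real.sqrt 2 * Real.cos ((k.1 + 1 : ℝ) * x)
      + a ⟨2 * k.1 + 2, by have := k.2; omega⟩ * Real.sqrt 2 * Real.sin ((k.1 + 1 : ℝ) * x))

/-- The sup norm of a function on `[0, 2π]`. -/
noncomputable def supNorm (f : ℝ → ℝ) : ℝ :=
  ⨆ x : Set.Icc (0 : ℝ) (2 * π), |f x.1|

lemma aux_mp {ι : Type} [Fintype ι] [DecidableEq ι] (U : ι → ι → ℝ)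
    (hU : ∀ j l, ∑ i, U j i * U l i = if j = l then 1 else 0) :
    MeasurePreserving (fun (a : ι → ℝ) (j : ι) => ∑ i, U j i * a i)
      (Measure.pi fun _ => gaussianReal 0 1) (Measure.pi fun _ => gaussianReal 0 1) := by
  let v : ι → EuclideanSpace ℝ ι := fun j => WithLp.toLp 2 (U j)
  have hv : Orthonormal ℝ v := by
    rw [orthonormal_iff_ite]
    intro j l
    rw [← hU j l]
    simp [v, PiLp.inner_apply, mul_comm]
  have hcard : Fintype.card ι = Module.finrank ℝ (EuclideanSpace ℝ ι) := by simp
  have hspan : ⊤ ≤ Submodule.span ℝ (Set.range v) := by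
    rw [LinearIndependent.span_eq_top_of_card_eq_finrank' hv.linearIndependent hcard]
  let b : OrthonormalBasis ι ℝ (EuclideanSpace ℝ ι) := OrthonormalBasis.mk hv hspan
  have h1 := map_pi_eq_stdGaussian (ι := ι)
  have h2 := stdGaussian_map b.repr
  have e : (fun (a : ι → ℝ) (j : ι) => ∑ i, U j i * a i) =
      (WithLp.ofLp : EuclideanSpace ℝ ι → (ι → ℝ)) ∘ b.repr ∘
        (WithLp.toLp 2 : (ι → ℝ) → EuclideanSpace ℝ ι) := by
    funext a j
    simp [b, OrthonormalBasis.repr_apply_apply, v, PiLp.inner_apply, mul_comm]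
  refine ⟨by fun_prop, ?_⟩
  rw [e, ← Measure.map_map (by fun_prop) (by fun_prop),
    ← Measure.map_map (by fun_prop) (by fun_prop), h1, h2, ← h1,
    Measure.map_map (by fun_prop) (by fun_prop)]
  exact Measure.map_id

lemma aux_integrable (s : ℝ) (hs1 : s < 1) :
    Integrable (fun x : ℝ => |x| ^ (-s)) (gaussianReal 0 1) := by
  rw [gaussianReal_of_var_ne_zero 0 one_ne_zero]
  rw [integrable_withDensity_iff (measurable_gaussianPDF 0 1) (by simp [gaussianPDF])]
  simp only [toReal_gaussianPDF]
  have h0 : IntegrableOn (fun x : ℝ => |x| ^ (-s) * gaussianPDFReal 0 1 x) (Set.Ioi 0) := by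
    have := (integrableOn_rpow_mul_exp_neg_mul_sq (b := 1/2) (by norm_num)
      (show -1 < -s by linarith)).const_mul ((√(2 * π))⁻¹)
    refine IntegrableOn.congr_fun this ?_ measurableSet_Ioi
    intro x hx
    simp only [gaussianPDFReal, abs_of_pos (Set.mem_Ioi.1 hx)]
    simp
    ring_nf
  have h1 : IntegrableOn (fun x : ℝ => |x| ^ (-s) * gaussianPDFReal 0 1 x) (Set.Iio 0) := by
    have := (Measure.measurePreserving_neg (volume : Measure ℝ)).integrableOn_comp_preimage
      (Homeomorph.neg ℝ).measurableEmbedding (f := fun x : ℝ => |x| ^ (-s) * gaussianPDFReal 0 1 x)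
      (s := Set.Ioi 0)
    have h2 := this.2 h0
    simpa [Function.comp_def, gaussianPDFReal] using h2
  rw [← integrableOn_univ, ← Set.Iio_union_Ici (a := (0:ℝ))]
  exact h1.union ((integrableOn_Ici_iff_integrableOn_Ioi enorm_ne_top).2 h0)

lemma aux_tail (t : ℝ) (ht : 0 ≤ t) :
    ∫ x, (Set.Icc (-t) t).indicator (fun _ => (1:ℝ)) x ∂(gaussianReal 0 1) ≤
      1 - (√(2 * π))⁻¹ * exp (-1) * exp (-t ^ 2) := by
  rw [integral_indicator_const _ measurableSet_Icc]
  have hsub : Set.Icc (-t) t ⊆ (Set.Ioc t (t+1))ᶜ := by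
    intro x hx; simp only [Set.mem_compl_iff, Set.mem_Ioc]; intro h; linarith [hx.2, h.1]
  have h1 : (gaussianReal 0 1).real (Set.Icc (-t) t) ≤
      1 - (gaussianReal 0 1).real (Set.Ioc t (t+1)) := by
    rw [← probReal_compl_eq_one_sub measurableSet_Ioc]
    exact measureReal_mono hsub
  have h2 : (√(2 * π))⁻¹ * exp (-1) * exp (-t ^ 2) ≤ (gaussianReal 0 1).real (Set.Ioc t (t+1)) := by
    rw [Measure.real, gaussianReal_apply_eq_integral 0 one_ne_zero, ENNReal.toReal_ofReal
      (integral_nonneg fun x => gaussianPDFReal_nonneg 0 1 x)]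
    have : ∫ x in Set.Ioc t (t+1), (√(2 * π))⁻¹ * exp (-1) * exp (-t ^ 2) =
       (√(2 * π))⁻¹ * exp (-1) * exp (-t ^ 2) := by simp
    rw [← this]
    refine setIntegral_mono_on (integrableOn_const (by simp)) (integrable_gaussianPDFReal 0 1).integrableOn
      measurableSet_Ioc ?_
    intro x hx
    rw [gaussianPDFReal, mul_assoc, ← exp_add]
    have hx1 := hx.1
    have hx2 := hx.2
    simp only [NNReal.coe_one, mul_one, sub_zero]
    gcongr
    nlinarith [sq_nonneg (t-1)]
  simp only [smul_eq_mul, mul_one]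
  linarith

lemma aux_dirichlet (n : ℕ) (θ : ℝ) :
    sin (θ / 2) * (1 + ∑ k ∈ Finset.range n, 2 * cos ((k + 1 : ℝ) * θ)) =
      sin ((2 * n + 1) * θ / 2) := by
  induction n with
  | zero => simp
  | succ n ih =>
    rw [Finset.sum_range_succ, ← add_assoc, mul_add, ih]
    have e1 : (2 * (n:ℝ) + 1) * θ / 2 = (n + 1) * θ - θ / 2 := by ring
    have e2 : (2 * ((n + 1 : ℕ) : ℝ) + 1) * θ / 2 = (n + 1) * θ + θ / 2 := by push_cast; ring
    rw [e1, e2, sin_sub, sin_add]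
    ring

lemma aux_sum (n : ℕ) (F : Fin (2 * n + 1) → ℝ) :
    ∑ i, F i = F ⟨0, by omega⟩ + ∑ k : Fin n,
      (F ⟨2 * k.1 + 1, by have := k.2; omega⟩ + F ⟨2 * k.1 + 2, by have := k.2; omega⟩) := by
  induction n with
  | zero => simp
  | succ n ih =>
    have h := Fin.sum_univ_castSucc (n := 2 * n + 2) F
    rw [Fin.sum_univ_castSucc (n := 2 * n + 1)] at h
    have h2 := ih (fun i => F ⟨i.1, by omega⟩)
    rw [Fin.sum_univ_castSucc (n := n)]
    simp only [Fin.castSucc, Fin.castAdd, Fin.castLE, Fin.last] at h ⊢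
    refine h.trans ?_
    rw [h2]
    ring

/-- The trigonometric system. -/
noncomputable def trigBase (n : ℕ) (x : ℝ) (i : Fin (2 * n + 1)) : ℝ :=
  if i.1 = 0 then 1 else if i.1 % 2 = 1 then √2 * cos (((i.1 + 1) / 2 : ℕ) * x)
    else √2 * sin ((i.1 / 2 : ℕ) * x)

lemma trigBase_zero (n : ℕ) (x : ℝ) (h) : trigBase n x ⟨0, h⟩ = 1 := by simp [trigBase]

lemma trigBase_odd (n k : ℕ) (x : ℝ) (h) :
    trigBase n x ⟨2 * k + 1, h⟩ = √2 * cos ((k + 1 : ℝ) * x) := by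
  have : (2 * k + 1 + 1) / 2 = k + 1 := by omega
  simp only [trigBase, this]
  rw [if_neg (by omega), if_pos (by omega)]
  push_cast; rfl

lemma trigBase_even (n k : ℕ) (x : ℝ) (h) :
    trigBase n x ⟨2 * k + 2, h⟩ = √2 * sin ((k + 1 : ℝ) * x) := by
  have : (2 * k + 2) / 2 = k + 1 := by omega
  simp only [trigBase, this]
  rw [if_neg (by omega), if_neg (by omega)]
  push_cast; rfl

lemma trigPoly_eq (n : ℕ) (a : Fin (2 * n + 1) → ℝ) (x : ℝ) :
    trigPoly n a x = ∑ i, trigBase n x i * a i := by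
  rw [aux_sum]
  simp only [trigBase_zero, trigBase_odd, trigBase_even, trigPoly]
  rw [one_mul]
  congr 1
  refine Finset.sum_congr rfl fun k _ => ?_
  ring

lemma trigBase_mul (n : ℕ) (x y : ℝ) :
    ∑ i, trigBase n x i * trigBase n y i =
      1 + ∑ k ∈ Finset.range n, 2 * cos ((k + 1 : ℝ) * (x - y)) := by
  rw [aux_sum]
  simp only [trigBase_zero, trigBase_odd, trigBase_even]
  rw [one_mul, Finset.sum_range]
  congr 1
  refine Finset.sum_congr rfl fun k _ => ?_
  rw [mul_sub, cos_sub]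
  have : √2 * √2 = (2:ℝ) := by norm_num
  linear_combination (cos ((k + 1 : ℝ) * x) * cos ((k + 1 : ℝ) * y) +
    sin ((k + 1 : ℝ) * x) * sin ((k + 1 : ℝ) * y)) * this

lemma aux_orth (n : ℕ) (j l : Fin (2 * n + 1)) :
    ∑ i, trigBase n (2 * π * j.1 / (2 * n + 1)) i * trigBase n (2 * π * l.1 / (2 * n + 1)) i =
      if j = l then (2 * n + 1 : ℝ) else 0 := by
  rw [trigBase_mul]
  have hN : (0:ℝ) < 2 * n + 1 := by positivity
  split_ifs with h
  · subst h
    simp; ring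
  · have hd := aux_dirichlet n (2 * π * j.1 / (2 * n + 1) - 2 * π * l.1 / (2 * n + 1))
    have e1 : (2 * (n:ℝ) + 1) * (2 * π * j.1 / (2 * n + 1) - 2 * π * l.1 / (2 * n + 1)) / 2 =
      (((j.1 : ℤ) - (l.1 : ℤ) : ℤ) : ℝ) * π := by
      push_cast; field_simp
    rw [e1, sin_int_mul_pi] at hd
    refine (mul_eq_zero.1 hd).resolve_left ?_
    intro h0
    rw [sin_eq_zero_iff] at h0
    obtain ⟨q, hq⟩ := h0
    have e2 : (q : ℝ) * (2 * n + 1) = j.1 - l.1 := by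
      have := pi_pos.ne'
      field_simp at hq
      linear_combination hq
    have e3 : q * (2 * n + 1) = (j.1 : ℤ) - l.1 := by exact_mod_cast e2
    have hj := j.2
    have hl := l.2
    have hjl : j.1 ≠ l.1 := fun h' => h (Fin.ext h')
    rcases lt_trichotomy q 0 with hq0 | hq0 | hq0
    · nlinarith
    · subst hq0; omega
    · nlinarith

lemma supNorm_ge (n : ℕ) (a : Fin (2 * n + 1) → ℝ) (x : ℝ) (hx : x ∈ Set.Icc 0 (2 * π)) :
    |trigPoly n a x| ≤ supNorm (trigPoly n a) := by
  have hc : Continuous (trigPoly n a) := by unfold trigPoly; fun_prop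
  have hb : BddAbove (Set.range fun x : Set.Icc (0 : ℝ) (2 * π) => |trigPoly n a x.1|) := by
    have := (isCompact_Icc (a := (0:ℝ)) (b := 2 * π)).bddAbove_image
      (f := fun x => |trigPoly n a x|) hc.abs.continuousOn
    rwa [Set.image_eq_range] at this
  exact le_ciSup hb ⟨x, hx⟩

/-- The factors in the product bound. -/
noncomputable def fac (m : ℕ) (s t : ℝ) (j : ℕ) (x : ℝ) : ℝ :=
  if j < m then |x| ^ (-s) else (Set.Icc (-t) t).indicator (fun _ => (1:ℝ)) x

lemma fac_nonneg (m : ℕ) (s t : ℝ) (j : ℕ) (x : ℝ) : 0 ≤ fac m s t j x := by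
  unfold fac
  split_ifs
  · positivity
  · exact Set.indicator_nonneg (fun _ _ => zero_le_one) x

lemma fac_integrable (m : ℕ) (s t : ℝ) (hs : s < 1) (j : ℕ) :
    Integrable (fac m s t j) (gaussianReal 0 1) := by
  unfold fac
  split_ifs
  · exact aux_integrable s hs
  · exact (integrable_const (1:ℝ)).indicator measurableSet_Icc

lemma prod_ite_pow (N m : ℕ) (hm : m ≤ N) (A B : ℝ) :
    ∏ j : Fin N, (if j.1 < m then A else B) = A ^ m * B ^ (N - m) := by
  rw [Fin.prod_univ_eq_prod_range (fun j => if j < m then A else B) N]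
  obtain ⟨d, rfl⟩ := Nat.exists_eq_add_of_le hm
  rw [Finset.prod_range_add]
  have h1 : ∏ x ∈ Finset.range m, (if x < m then A else B) = ∏ x ∈ Finset.range m, A :=
    Finset.prod_congr rfl fun x hx => if_pos (Finset.mem_range.1 hx)
  rw [h1]
  simp

lemma fac_integral (N m : ℕ) (hm : m ≤ N) (s t : ℝ) :
    ∫ x : Fin N → ℝ, ∏ j, fac m s t j.1 (x j) ∂(Measure.pi fun _ => gaussianReal 0 1) =
      (∫ x, |x| ^ (-s) ∂(gaussianReal 0 1)) ^ m *
      (∫ x, (Set.Icc (-t) t).indicator (fun _ => (1:ℝ)) x ∂(gaussianReal 0 1)) ^ (N - m) := by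
  rw [integral_fintype_prod_eq_prod (fun (j : Fin N) x => fac m s t j.1 x), ← prod_ite_pow N m hm]
  refine Finset.prod_congr rfl fun j _ => ?_
  unfold fac
  split_ifs <;> rfl

lemma ptwise (N m : ℕ) (hm : m ≤ N) (hm0 : 0 < m) (r t S : ℝ) (hr : 0 < r) (ht : 0 < t)
    (X : Fin N → ℝ) (hX : ∀ j, X j ≠ 0) (hS : ∀ j, |X j| ≤ S) :
    S ^ (-r) ≤ t ^ (-r) + ∏ j, fac m (r / m) t j.1 (X j) := by
  have hprod : 0 ≤ ∏ j, fac m (r / m) t j.1 (X j) :=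
    Finset.prod_nonneg fun j _ => fac_nonneg _ _ _ _ _
  by_cases h : ∃ j, t < |X j|
  · obtain ⟨j, hj⟩ := h
    have : S ^ (-r) ≤ t ^ (-r) :=
      rpow_le_rpow_of_nonpos ht (hj.le.trans (hS j)) (by linarith)
    linarith
  · push Not at h
    have hSpos : 0 < S := (abs_pos.2 (hX ⟨0, by omega⟩)).trans_le (hS _)
    have e : S ^ (-r) = ∏ j : Fin N, (if j.1 < m then S ^ (-(r / m)) else 1) := by
      rw [prod_ite_pow N m hm, one_pow, mul_one, ← rpow_natCast, ← rpow_mul hSpos.le]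
      congr 1
      field_simp
    have h2 : S ^ (-r) ≤ ∏ j, fac m (r / m) t j.1 (X j) := by
      rw [e]
      refine Finset.prod_le_prod (fun j _ => by split_ifs <;> positivity) fun j _ => ?_
      unfold fac
      split_ifs
      · refine rpow_le_rpow_of_nonpos (abs_pos.2 (hX j)) (hS j) ?_
        have : 0 < r / m := by positivity
        linarith
      · rw [Set.indicator_of_mem (Set.mem_Icc.2 (abs_le.1 (h j)))]
    have : 0 ≤ t ^ (-r) := by positivity
    linarith

lemma num_bound (N m : ℕ) (hm : m ≤ N) (hN : 1 < N) (r c p : ℝ) (hr : 0 < r) (hc : 0 < c)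
    (hp0 : 0 ≤ p) (hp : p ≤ 1 - c * exp (-(log N / 2))) :
    p ^ (N - m) ≤ exp (c * m) * (r / c) ^ (r / 2) * log N ^ (-r / 2) := by
  have hN1 : (1:ℝ) < N := by exact_mod_cast hN
  have hL : 0 < log N := log_pos hN1
  set x := √(N:ℝ) with hx
  have hx1 : 1 < x := by rw [hx]; exact lt_sqrt_of_sq_lt (by simpa using hN1)
  have hxx : x * x = N := mul_self_sqrt (by positivity)
  have hlog : log N / 2 = log x := by rw [hx, log_sqrt (by positivity)]
  rw [hlog, exp_neg, exp_log (by linarith)] at hp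
  have hp1 : p ≤ exp (-(c * x⁻¹)) := by
    have := add_one_le_exp (-(c * x⁻¹)); linarith
  have h1 : p ^ (N - m) ≤ exp (c * m) * exp (-(c * x)) := by
    refine (pow_le_pow_left₀ hp0 hp1 _).trans ?_
    rw [← exp_nat_mul, ← exp_add, Nat.cast_sub hm, ← hxx]
    apply exp_le_exp.2
    have hxi : x⁻¹ ≤ 1 := inv_le_one_of_one_le₀ hx1.le
    have e : (x * x - m) * -(c * x⁻¹) = c * m * x⁻¹ - c * x := by
      field_simp; ring
    rw [e]
    have : c * m * x⁻¹ ≤ c * m * 1 := by gcongr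
    linarith
  have h2 : log N ^ (r / 2) ≤ (r / c) ^ (r / 2) * exp (c * x) := by
    have hl : log N ≤ (r / c) * exp (c * x / (r / 2)) := by
      have ha : log N ≤ 2 * x := by
        have := log_le_sub_one_of_pos (show 0 < x by linarith)
        linarith
      have hb := add_one_le_exp (c * x / (r / 2))
      have : 2 * x = (r / c) * (c * x / (r / 2)) := by field_simp
      rw [this] at ha
      refine ha.trans ?_
      gcongr
      linarith
    calc log N ^ (r / 2) ≤ ((r / c) * exp (c * x / (r / 2))) ^ (r / 2) := by gcongr
      _ = _ := by
        rw [mul_rpow (by positivity) (by positivity), ← exp_mul]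
        congr 2
        field_simp
  have h3 : exp (-(c * x)) ≤ (r / c) ^ (r / 2) * log N ^ (-r / 2) := by
    rw [neg_div, rpow_neg hL.le, exp_neg]
    have : 0 < log N ^ (r / 2) := by positivity
    rw [← div_eq_mul_inv, le_div_iff₀ this, inv_mul_le_iff₀ (exp_pos _)]
    linarith
  calc _ ≤ exp (c * m) * exp (-(c * x)) := h1
    _ ≤ exp (c * m) * ((r / c) ^ (r / 2) * log N ^ (-r / 2)) := by gcongr
    _ = _ := by ring

/-- `E[‖T_a‖_∞^{-r}] ≤ C_r N^{-r/2} (log N)^{-r/2}` for `N = 2n+1 > max{e⁴, r+1}`. -/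
theorem expected_inv_sup_norm_trig (r : ℝ) (hr : 0 < r) :
    ∃ C : ℝ, 0 < C ∧ ∀ n : ℕ,
      Real.exp 4 < (2 * n + 1 : ℝ) → r + 1 < (2 * n + 1 : ℝ) →
      (∫ a : Fin (2 * n + 1) → ℝ, (supNorm (trigPoly n a)) ^ (-r)
          ∂(Measure.pi fun _ => gaussianReal 0 1)) ≤
        C * (2 * n + 1 : ℝ) ^ (-r / 2) * Real.log (2 * n + 1 : ℝ) ^ (-r / 2) := by
  obtain ⟨m, hmdef⟩ : ∃ m, m = ⌊r⌋₊ + 1 := ⟨_, rfl⟩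
  have hm0 : 0 < m := by omega
  have hmr : r < m := by rw [hmdef]; push_cast; exact Nat.lt_floor_add_one r
  have hmR : (0:ℝ) < m := by exact_mod_cast hm0
  have hs : r / m < 1 := (div_lt_one hmR).2 hmr
  obtain ⟨c, hc⟩ : ∃ c, c = (√(2 * π))⁻¹ * exp (-1) := ⟨_, rfl⟩
  have hc0 : 0 < c := by rw [hc]; positivity
  obtain ⟨K, hK⟩ : ∃ K, K = ∫ x, |x| ^ (-(r / m)) ∂(gaussianReal 0 1) := ⟨_, rfl⟩
  have hK0 : 0 ≤ K := by rw [hK]; exact integral_nonneg fun x => by positivity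
  refine ⟨2 ^ (r / 2) + K ^ m * (exp (c * m) * (r / c) ^ (r / 2)), by positivity, ?_⟩
  intro n hn1 hn2
  have hmN : m ≤ 2 * n + 1 := by
    have h1 : (⌊r⌋₊ : ℝ) ≤ r := Nat.floor_le hr.le
    have h2 : (m : ℝ) ≤ (2 * n + 1 : ℕ) := by rw [hmdef]; push_cast; linarith
    exact_mod_cast h2
  have hN1' : (1:ℝ) < 2 * n + 1 := by
    have := add_one_le_exp (4:ℝ); linarith
  have hN1 : 1 < 2 * n + 1 := by exact_mod_cast hN1'
  have hN0 : (0:ℝ) < 2 * n + 1 := by linarith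
  have hL : 0 < log (2 * n + 1 : ℝ) := log_pos hN1'
  obtain ⟨t, ht⟩ : ∃ t, t = √(log (2 * n + 1 : ℝ) / 2) := ⟨_, rfl⟩
  have ht0 : 0 < t := by rw [ht]; positivity
  have htt : t ^ 2 = log (2 * n + 1 : ℝ) / 2 := by rw [ht]; exact sq_sqrt (by positivity)
  let U : Fin (2 * n + 1) → Fin (2 * n + 1) → ℝ := fun j i =>
    (√(2 * n + 1 : ℝ))⁻¹ * trigBase n (2 * π * j.1 / (2 * n + 1)) i
  have hsq : √(2 * n + 1 : ℝ) * √(2 * n + 1 : ℝ) = 2 * n + 1 := mul_self_sqrt hN0.le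
  have hsq0 : 0 < √(2 * n + 1 : ℝ) := sqrt_pos.2 hN0
  have hU : ∀ j l, ∑ i, U j i * U l i = if j = l then 1 else 0 := by
    intro j l
    have : ∑ i, U j i * U l i = (2 * n + 1 : ℝ)⁻¹ *
        ∑ i, trigBase n (2 * π * j.1 / (2 * n + 1)) i *
          trigBase n (2 * π * l.1 / (2 * n + 1)) i := by
      rw [Finset.mul_sum]
      refine Finset.sum_congr rfl fun i _ => ?_
      rw [← hsq, mul_inv]
      simp only [U, hsq]
      ring
    rw [this, aux_orth]
    split_ifs
    · exact inv_mul_cancel₀ hN0.ne'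
    · simp
  have hmp := aux_mp U hU
  obtain ⟨X, hX⟩ : ∃ X : (Fin (2 * n + 1) → ℝ) → (Fin (2 * n + 1) → ℝ),
    X = fun a j => ∑ i, U j i * a i := ⟨_, rfl⟩
  rw [← hX] at hmp
  have hval : ∀ a j, trigPoly n a (2 * π * j.1 / (2 * n + 1)) = √(2 * n + 1 : ℝ) * X a j := by
    intro a j
    rw [trigPoly_eq, hX, Finset.mul_sum]
    refine Finset.sum_congr rfl fun i _ => ?_
    simp only [U]
    field_simp
  have hsup : ∀ a j, |X a j| ≤ (√(2 * n + 1 : ℝ))⁻¹ * supNorm (trigPoly n a) := by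
    intro a j
    have h1 := supNorm_ge n a (2 * π * j.1 / (2 * n + 1)) (by
      have hj : (j.1 : ℝ) ≤ 2 * n + 1 := by exact_mod_cast j.2.le
      refine ⟨by positivity, ?_⟩
      rw [div_le_iff₀ hN0]
      gcongr)
    rw [hval, abs_mul, abs_of_pos hsq0] at h1
    rwa [← div_eq_inv_mul, le_div_iff₀ hsq0, mul_comm]
  have hne : ∀ᵐ a ∂(Measure.pi fun _ : Fin (2 * n + 1) => gaussianReal 0 1), ∀ j, X a j ≠ 0 := by
    have : ∀ᵐ y ∂(Measure.pi fun _ : Fin (2 * n + 1) => gaussianReal 0 1), ∀ j, y j ≠ 0 := by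
      rw [ae_all_iff]
      intro j
      have := nullSingletonClass_gaussianReal (μ := 0) (v := 1) one_ne_zero
      exact Measure.ae_eval_ne _ j 0
    exact hmp.quasiMeasurePreserving.ae this
  let G : (Fin (2 * n + 1) → ℝ) → ℝ := fun y =>
    t ^ (-r) + ∏ j, fac m (r / m) t j.1 (y j)
  have hGi0 : Integrable (fun y : Fin (2 * n + 1) → ℝ => ∏ j, fac m (r / m) t j.1 (y j))
      (Measure.pi fun _ => gaussianReal 0 1) :=
    Integrable.fintype_prod (f := fun (j : Fin (2 * n + 1)) x => fac m (r / m) t j.1 x)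
      fun j => fac_integrable m _ t hs j.1
  have hGi : Integrable G (Measure.pi fun _ => gaussianReal 0 1) := (integrable_const _).add hGi0
  have hGX : Integrable (fun a => G (X a)) (Measure.pi fun _ => gaussianReal 0 1) :=
    hmp.integrable_comp_of_integrable hGi
  have hGint : ∫ a, G (X a) ∂(Measure.pi fun _ => gaussianReal 0 1) =
      ∫ y, G y ∂(Measure.pi fun _ => gaussianReal 0 1) := by
    have := integral_map (μ := Measure.pi fun _ : Fin (2 * n + 1) => gaussianReal 0 1)
      hmp.measurable.aemeasurable (f := G) (by rw [hmp.map_eq]; exact hGi.aestronglyMeasurable)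
    rw [hmp.map_eq] at this
    exact this.symm
  have hle : ∫ a : Fin (2 * n + 1) → ℝ, (supNorm (trigPoly n a)) ^ (-r)
          ∂(Measure.pi fun _ => gaussianReal 0 1) ≤
      ∫ a, (2 * n + 1 : ℝ) ^ (-r / 2) * G (X a) ∂(Measure.pi fun _ => gaussianReal 0 1) := by
    have hS0 : ∀ a, 0 ≤ supNorm (trigPoly n a) := fun a =>
      Real.iSup_nonneg fun x => abs_nonneg _
    refine integral_mono_of_nonneg (Filter.Eventually.of_forall fun a => rpow_nonneg (hS0 a) _)
      (hGX.const_mul _) ?_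
    filter_upwards [hne] with a ha
    have h1 := ptwise (2 * n + 1) m hmN hm0 r t _ hr ht0 (X a) ha (hsup a)
    have h2 : supNorm (trigPoly n a) ^ (-r) = (2 * n + 1 : ℝ) ^ (-r / 2) *
        ((√(2 * n + 1 : ℝ))⁻¹ * supNorm (trigPoly n a)) ^ (-r) := by
      rw [mul_rpow (by positivity) (hS0 a), ← mul_assoc, inv_rpow hsq0.le, ← rpow_neg hsq0.le,
        sqrt_eq_rpow, ← rpow_mul hN0.le, ← rpow_add hN0]
      ring_nf
      simp
    rw [h2]
    gcongr
  refine hle.trans ?_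
  rw [integral_const_mul, hGint]
  have hG : ∫ y, G y ∂(Measure.pi fun _ => gaussianReal 0 1) = t ^ (-r) + K ^ m *
      (∫ x, (Set.Icc (-t) t).indicator (fun _ => (1:ℝ)) x ∂(gaussianReal 0 1)) ^
        (2 * n + 1 - m) := by
    simp only [G]
    rw [integral_add (integrable_const _) hGi0, fac_integral _ m hmN, hK]
    simp
  have hnum := num_bound (2 * n + 1) m hmN hN1 r c
    (∫ x, (Set.Icc (-t) t).indicator (fun _ => (1:ℝ)) x ∂(gaussianReal 0 1)) hr hc0
    (integral_nonneg fun x => Set.indicator_nonneg (fun _ _ => zero_le_one) x) (by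
      have := aux_tail t ht0.le
      rw [htt, ← hc] at this
      push_cast
      exact this)
  push_cast at hnum
  have htr : t ^ (-r) = 2 ^ (r / 2) * log (2 * n + 1 : ℝ) ^ (-r / 2) := by
    rw [ht, sqrt_eq_rpow, ← rpow_mul (by positivity), div_rpow hL.le (by norm_num),
      div_eq_mul_inv, ← rpow_neg (by norm_num), mul_comm]
    congr 2 <;> ring
  rw [hG, htr]
  have : K ^ m * (∫ x, (Set.Icc (-t) t).indicator (fun _ => (1:ℝ)) x ∂(gaussianReal 0 1)) ^
        (2 * n + 1 - m) ≤ K ^ m * (exp (c * m) * (r / c) ^ (r / 2) *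
          log (2 * n + 1 : ℝ) ^ (-r / 2)) := by gcongr
  calc _ ≤ (2 * n + 1 : ℝ) ^ (-r / 2) * (2 ^ (r / 2) * log (2 * n + 1 : ℝ) ^ (-r / 2) +
        K ^ m * (exp (c * m) * (r / c) ^ (r / 2) * log (2 * n + 1 : ℝ) ^ (-r / 2))) := by gcongr
    _ = _ := by ring
end
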